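/- arXiv:1402.2750 — 2 statements merged into one kernel-verified Lean document; each statement's English description precedes it below -/
import Mathlib

section
/- Let n ≥ 2 and s ≥ 0 be integers, let f be a harmonic homogeneous polynomial of degree s on ℝⁿ, let h be a harmonic homogeneous polynomial of degree s+2 on ℝⁿ, and let X be a symmetric real n×n matrix with trace 0. Then ∫_{S^{n−1}} f(y) · ⟨Xy, ∇h(y)⟩ dσ(y) = (n + 2s + 2) · ∫_{S^{n−1}} ⟨Xy, y⟩ · f(y) · h(y) dσ(y). -/
open MeasureTheory
open scoped RealInnerProductSpace

/-- The second partial derivative `∂²f/∂yᵢ∂yⱼ` of `f : ℝⁿ → ℝ` at `y`. -/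
noncomputable def secondPartialDeriv {n : ℕ} (f : EuclideanSpace ℝ (Fin n) → ℝ) (i j : Fin n)
    (y : EuclideanSpace ℝ (Fin n)) : ℝ :=
  fderiv ℝ (fun z => fderiv ℝ f z (EuclideanSpace.single j 1)) y (EuclideanSpace.single i 1)

/-- `f : ℝⁿ → ℝ` is a harmonic polynomial, homogeneous of degree `s`: it is a polynomial
function, `f (t • y) = t ^ s * f y` for `t > 0`, and `∑ i, ∂²f/∂yᵢ² = 0`. -/
def IsHarmonicHomogeneous (n s : ℕ) (f : EuclideanSpace ℝ (Fin n) → ℝ) : Prop :=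
  (∃ p : MvPolynomial (Fin n) ℝ, ∀ y, f y = MvPolynomial.eval (fun i => y i) p) ∧
  (∀ t : ℝ, 0 < t → ∀ y, f (t • y) = t ^ s * f y) ∧
  (∀ y, ∑ i, secondPartialDeriv f i i y = 0)

/-- The spherical Lebesgue (surface area) measure on the unit sphere `S^{n-1} ⊆ ℝⁿ`. -/
noncomputable def sphereMeasure (n : ℕ) :
    Measure (Metric.sphere (0 : EuclideanSpace ℝ (Fin n)) 1) :=
  (volume : Measure (EuclideanSpace ℝ (Fin n))).toSphere

/-- The action of a matrix `X` on a vector `y ∈ ℝⁿ`, as a vector of Euclidean space. -/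
noncomputable def mulVecE {n : ℕ} (X : Matrix (Fin n) (Fin n) ℝ)
    (y : EuclideanSpace ℝ (Fin n)) : EuclideanSpace ℝ (Fin n) :=
  (WithLp.equiv 2 (Fin n → ℝ)).symm (X.mulVec fun i => y i)

/-!
Integrate by parts against the Gaussian weight `exp (-‖y‖² / 2)`: its gradient is `-y` times the
weight, so the functional `p ↦ ∫ p exp (-‖y‖² / 2)` does not distinguish `yᵢ p` from `∂ᵢ p`. With
Euler's identity this shows that it kills `p q` whenever `q` is harmonic and homogeneous of degree
larger than that of `p`. For a homogeneous polynomial vector field `W` of degree at most `deg h`,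
the term `(div W) h` of `div (h W)` therefore integrates to `0`, leaving
`∫ ⟨W, y⟩ h exp (-‖y‖² / 2) = ∫ ⟨W, ∇h⟩ exp (-‖y‖² / 2)`. Both integrands are homogeneous, of
degrees differing by `2`, so in polar coordinates each side is a sphere integral times a radial
moment `∫ r ^ k exp (-r² / 2)`, and consecutive moments of the same parity have ratio `k + 1`.
Taking `W = f X y` gives the identity; the constant is `k + 1` for `k = n - 1 + deg f + deg h`.
-/

section Polynomial

open MvPolynomial

section CommSemiring

variable {σ R : Type*} [CommSemiring R]

theorem pderiv_pderiv_comm (i j : σ) (p : MvPolynomial σ R) :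
    pderiv i (pderiv j p) = pderiv j (pderiv i p) := by
  classical
  ext m
  rcases eq_or_ne i j with rfl | hij
  · rfl
  · simp only [coeff_pderiv, Finsupp.add_apply, Finsupp.single_eq_of_ne hij,
      Finsupp.single_eq_of_ne hij.symm, add_zero]
    rw [add_right_comm m]
    ring

theorem pderiv_eq_zero_or_totalDegree_lt (i : σ) (p : MvPolynomial σ R) :
    pderiv i p = 0 ∨ (pderiv i p).totalDegree < p.totalDegree := by
  refine or_iff_not_imp_left.2 fun hne ↦ ?_
  obtain ⟨m, hm, hdeg⟩ := Finset.exists_mem_eq_sup _ (support_nonempty.2 hne)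
    fun m : σ →₀ ℕ ↦ m.sum fun _ e ↦ e
  have hmem : m + Finsupp.single i 1 ∈ p.support := by
    rw [mem_support_iff, coeff_pderiv] at *
    exact left_ne_zero_of_mul hm
  calc (pderiv i p).totalDegree = m.sum fun _ e ↦ e := hdeg
    _ < (m + Finsupp.single i 1).sum fun _ e ↦ e := by
      rw [Finsupp.sum_add_index' (fun _ ↦ rfl) fun _ _ _ ↦ rfl, Finsupp.sum_single_index rfl]
      exact Nat.lt_succ_self _
    _ ≤ p.totalDegree := le_totalDegree hmem

theorem eval_smul_of_isHomogeneous {d : ℕ} {p : MvPolynomial σ R} (hp : p.IsHomogeneous d)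
    (t : R) (x : σ → R) : eval (t • x) p = t ^ d * eval x p := by
  simp only [eval_eq, Finset.mul_sum, Pi.smul_apply, smul_eq_mul, mul_pow, Finset.prod_mul_distrib,
    Finset.prod_pow_eq_pow_sum]
  refine Finset.sum_congr rfl fun m hm ↦ ?_
  rw [← hp.degree_eq_sum_deg_support hm]
  ring

theorem eval_smul_eq_eval_sum_homogeneousComponent (t : R) (x : σ → R) (p : MvPolynomial σ R) :
    eval (t • x) p =
      eval x (∑ k ∈ Finset.range (p.totalDegree + 1), t ^ k • homogeneousComponent k p) := by
  conv_lhs => rw [← sum_homogeneousComponent p]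
  simp only [map_sum, smul_eval,
    eval_smul_of_isHomogeneous (homogeneousComponent_isHomogeneous _ p)]

/-- The Laplacian `∑ i, ∂ᵢ²`, acting on polynomials formally. -/
noncomputable def polyLaplacian [Fintype σ] : MvPolynomial σ R →ₗ[R] MvPolynomial σ R :=
  ∑ i, (pderiv i).toLinearMap ∘ₗ (pderiv i).toLinearMap

theorem polyLaplacian_apply [Fintype σ] (p : MvPolynomial σ R) :
    polyLaplacian p = ∑ i, pderiv i (pderiv i p) := by
  simp [polyLaplacian]

theorem polyLaplacian_pderiv [Fintype σ] (i : σ) (p : MvPolynomial σ R) :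
    polyLaplacian (pderiv i p) = pderiv i (polyLaplacian p) := by
  simp only [polyLaplacian_apply, map_sum, pderiv_pderiv_comm _ i]

end CommSemiring

theorem isHomogeneous_of_eval_smul {σ R : Type*} [CommRing R] [IsDomain R] {t : R}
    (ht : Function.Injective fun k : ℕ ↦ t ^ k) {d : ℕ} {p : MvPolynomial σ R}
    (hp : ∀ x : σ → R, eval (t • x) p = t ^ d * eval x p) : p.IsHomogeneous d := by
  have : Infinite R := Infinite.of_injective _ ht
  have hsum : ∑ k ∈ Finset.range (p.totalDegree + 1), t ^ k • homogeneousComponent k p =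
      t ^ d • p :=
    MvPolynomial.funext fun x ↦ by
      rw [← eval_smul_eq_eval_sum_homogeneousComponent, hp, smul_eval]
  intro m hm
  have hmem : m.degree ∈ Finset.range (p.totalDegree + 1) :=
    Finset.mem_range_succ_iff.2 (le_totalDegree (mem_support_iff.2 hm))
  have hpow : t ^ m.degree * coeff m p = t ^ d * coeff m p := by
    simpa only [coeff_sum, coeff_smul, coeff_homogeneousComponent, smul_eq_mul, mul_ite, mul_zero,
      Finset.sum_ite_eq, hmem, if_true] using congrArg (coeff m) hsum
  have hdeg : m.degree = Finsupp.weight 1 m := congrArg (· m) Finsupp.degree_eq_weight_one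
  rw [← hdeg]
  exact ht (mul_right_cancel₀ hm hpow)

end Polynomial

section Gradient

open MvPolynomial

variable {ι : Type*} [Fintype ι]

theorem hasFDerivAt_eval {𝕜 : Type*} [NontriviallyNormedField 𝕜] (p : MvPolynomial ι 𝕜)
    (x : ι → 𝕜) :
    HasFDerivAt (fun z : ι → 𝕜 ↦ eval z p)
      (∑ i, eval x (pderiv i p) • ContinuousLinearMap.proj (R := 𝕜) (φ := fun _ : ι ↦ 𝕜) i) x := by
  classical
  induction p using MvPolynomial.induction_on with
  | C a =>
    simp only [eval_C]
    exact (hasFDerivAt_const a x).congr_fderiv (by ext v; simp)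
  | add p q hp hq =>
    simp only [map_add]
    exact (hp.fun_add hq).congr_fderiv (by ext v; simp [add_mul, Finset.sum_add_distrib])
  | mul_X p j hp =>
    simp only [map_mul, eval_X]
    refine (hp.fun_mul (hasFDerivAt_apply j x)).congr_fderiv ?_
    ext v
    simp [Derivation.leibniz, pderiv_X, Pi.single_apply, apply_ite, add_mul,
      Finset.sum_add_distrib, Finset.mul_sum, mul_assoc]

theorem hasGradientAt_eval (p : MvPolynomial ι ℝ) (y : EuclideanSpace ℝ ι) :
    HasGradientAt (fun z : EuclideanSpace ℝ ι ↦ eval z.ofLp p)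
      (WithLp.toLp 2 fun i ↦ eval y.ofLp (pderiv i p)) y := by
  rw [hasGradientAt_iff_hasFDerivAt]
  refine ((hasFDerivAt_eval p y.ofLp).comp y
    (EuclideanSpace.equiv ι ℝ).hasFDerivAt).congr_fderiv ?_
  ext v
  simp [PiLp.inner_apply, mul_comm]

theorem inner_gradient_eval (p : MvPolynomial ι ℝ) (v y : EuclideanSpace ℝ ι) :
    ⟪v, gradient (fun z : EuclideanSpace ℝ ι ↦ eval z.ofLp p) y⟫ =
      ∑ i, v i * eval y.ofLp (pderiv i p) := by
  rw [(hasGradientAt_eval p y).gradient]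
  simp [PiLp.inner_apply, mul_comm]

theorem fderiv_eval_single {κ : Type*} [Finite κ] [DecidableEq κ] (p : MvPolynomial κ ℝ)
    (y : EuclideanSpace ℝ κ) (i : κ) :
    fderiv ℝ (fun z : EuclideanSpace ℝ κ ↦ eval z.ofLp p) y (EuclideanSpace.single i 1) =
      eval y.ofLp (pderiv i p) := by
  have := Fintype.ofFinite κ
  rw [(hasGradientAt_eval p y).hasFDerivAt.fderiv]
  simp [EuclideanSpace.inner_single_right]

end Gradient

section Polar

open Set Module

variable {E : Type*} [NormedAddCommGroup E] [NormedSpace ℝ E] [FiniteDimensional ℝ E]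
  [MeasurableSpace E] [BorelSpace E]
  {F : Type*} [NormedAddCommGroup F] [NormedSpace ℝ F]

theorem integral_volumeIoiPow (n : ℕ) (f : ℝ → F) :
    ∫ r : Ioi (0 : ℝ), f r ∂Measure.volumeIoiPow n = ∫ r in Ioi (0 : ℝ), r ^ n • f r := by
  simp only [Measure.volumeIoiPow, ENNReal.ofReal]
  rw [integral_withDensity_eq_integral_smul (measurable_subtype_coe.pow_const _).real_toNNReal,
    integral_subtype_comap measurableSet_Ioi fun r ↦ Real.toNNReal (r ^ n) • f r]
  refine setIntegral_congr_fun measurableSet_Ioi fun r hr ↦ ?_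
  rw [NNReal.smul_def, Real.coe_toNNReal _ (pow_nonneg hr.out.le _)]

theorem integral_eq_integral_toSphere_prod_volumeIoiPow [Nontrivial E] (μ : Measure E)
    [μ.IsAddHaarMeasure] (f : E → F) :
    ∫ x, f x ∂μ =
      ∫ z : Metric.sphere (0 : E) 1 × Ioi (0 : ℝ), f ((z.2 : ℝ) • (z.1 : E))
        ∂μ.toSphere.prod (Measure.volumeIoiPow (finrank ℝ E - 1)) := by
  calc ∫ x, f x ∂μ = ∫ x : ({0}ᶜ : Set E), f x ∂μ.comap (↑) := by
        rw [integral_subtype_comap (measurableSet_singleton _).compl f, restrict_compl_singleton]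
    _ = _ := by
        simp only [← homeomorphUnitSphereProd_symm_apply_coe,
          ← μ.measurePreserving_homeomorphUnitSphereProd.integral_comp
            (Homeomorph.measurableEmbedding _), Homeomorph.symm_apply_apply]

theorem integral_fun_norm_smul_of_homogeneous [Nontrivial E] (μ : Measure E) [μ.IsAddHaarMeasure]
    {f : E → F} {d : ℕ} (hf : ∀ r : ℝ, 0 < r → ∀ x, f (r • x) = r ^ d • f x) (φ : ℝ → ℝ) :
    ∫ x, φ ‖x‖ • f x ∂μ =
      (∫ r in Ioi (0 : ℝ), r ^ (finrank ℝ E - 1 + d) * φ r) •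
        ∫ u : Metric.sphere (0 : E) 1, f u ∂μ.toSphere := by
  have hpolar (u : Metric.sphere (0 : E) 1) (r : Ioi (0 : ℝ)) :
      φ ‖(r : ℝ) • (u : E)‖ • f ((r : ℝ) • (u : E)) = (φ r * (r : ℝ) ^ d) • f u := by
    rw [norm_smul, norm_eq_of_mem_sphere u, mul_one, Real.norm_of_nonneg r.2.out.le, hf r r.2,
      smul_smul]
  rw [integral_eq_integral_toSphere_prod_volumeIoiPow]
  simp only [hpolar]
  rw [← integral_prod_swap]
  simp only [Prod.fst_swap, Prod.snd_swap]
  rw [integral_prod_smul (fun r : Ioi (0 : ℝ) ↦ φ r * (r : ℝ) ^ d)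
      (fun u : Metric.sphere (0 : E) 1 ↦ f u),
    integral_volumeIoiPow _ fun r ↦ φ r * r ^ d]
  simp only [smul_eq_mul, pow_add, mul_assoc, mul_comm (φ _)]

end Polar

section RadialMoment

open Set

/-- The moment `∫₀^∞ r ^ k e ^ (-r² / 2) dr`: the radial factor of the Gaussian integral of a
homogeneous function in polar coordinates. -/
noncomputable def gaussianRadialMoment (k : ℕ) : ℝ :=
  ∫ r in Ioi (0 : ℝ), r ^ k * Real.exp (-(1 / 2) * r ^ 2)

theorem gaussianRadialMoment_eq_Gamma (k : ℕ) :
    gaussianRadialMoment k =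
      (1 / 2 : ℝ) ^ (-((k : ℝ) + 1) / 2) * (1 / 2) * Real.Gamma (((k : ℝ) + 1) / 2) := by
  rw [← integral_rpow_mul_exp_neg_mul_rpow two_pos (by linarith [k.cast_nonneg (α := ℝ)])
    one_half_pos]
  simp only [gaussianRadialMoment, Real.rpow_natCast, Real.rpow_two]

theorem gaussianRadialMoment_add_two (k : ℕ) :
    gaussianRadialMoment (k + 2) = (k + 1) * gaussianRadialMoment k := by
  have hGamma : ((k + 2 : ℕ) + 1 : ℝ) / 2 = (k + 1) / 2 + 1 := by push_cast; ring
  have hpow : -((k + 2 : ℕ) + 1 : ℝ) / 2 = -(k + 1) / 2 + -1 := by push_cast; ring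
  rw [gaussianRadialMoment_eq_Gamma, gaussianRadialMoment_eq_Gamma, hGamma, hpow,
    Real.Gamma_add_one (by positivity), Real.rpow_add one_half_pos, Real.rpow_neg_one]
  ring

theorem gaussianRadialMoment_pos (k : ℕ) : 0 < gaussianRadialMoment k := by
  have := Real.Gamma_pos_of_pos (s := ((k : ℝ) + 1) / 2) (by positivity)
  rw [gaussianRadialMoment_eq_Gamma]
  positivity

end RadialMoment

section GaussianIntegral

open MvPolynomial

variable {ι : Type*} [Fintype ι]

theorem integrable_pow_mul_exp_neg_mul_sq (k : ℕ) {b : ℝ} (hb : 0 < b) :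
    Integrable fun x : ℝ ↦ x ^ k * Real.exp (-b * x ^ 2) := by
  simpa only [Real.rpow_natCast] using
    integrable_rpow_mul_exp_neg_mul_sq hb (s := k) (by linarith [k.cast_nonneg (α := ℝ)])

theorem integrable_eval_mul_exp_neg_mul_norm_sq (p : MvPolynomial ι ℝ) {b : ℝ} (hb : 0 < b) :
    Integrable fun y : EuclideanSpace ℝ ι ↦ eval y.ofLp p * Real.exp (-b * ‖y‖ ^ 2) := by
  induction p using MvPolynomial.induction_on' with
  | monomial m a =>
    rw [← (PiLp.volume_preserving_toLp ι).integrable_comp_emb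
      (MeasurableEquiv.toLp 2 _).measurableEmbedding]
    have hprod := Integrable.fintype_prod (μ := fun _ : ι ↦ (volume : Measure ℝ))
      fun i ↦ integrable_pow_mul_exp_neg_mul_sq (m i) hb
    refine (hprod.const_mul a).congr (.of_forall fun x ↦ ?_)
    simp only [Function.comp, eval_monomial, Finsupp.prod_fintype, pow_zero, implies_true,
      EuclideanSpace.norm_sq_eq, Finset.mul_sum, Real.exp_sum, Finset.prod_mul_distrib,
      Real.norm_eq_abs, sq_abs, mul_assoc]
  | add p q hp hq =>
    simp only [map_add, add_mul]
    exact hp.add hq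

/-- The integral of a polynomial on Euclidean space against the unnormalised standard Gaussian
weight, as a linear functional. -/
noncomputable def gaussianIntegral : MvPolynomial ι ℝ →ₗ[ℝ] ℝ where
  toFun p := ∫ y : EuclideanSpace ℝ ι, eval y.ofLp p * Real.exp (-(1 / 2) * ‖y‖ ^ 2)
  map_add' p q := by
    simp only [map_add, add_mul]
    exact integral_add (integrable_eval_mul_exp_neg_mul_norm_sq p one_half_pos)
      (integrable_eval_mul_exp_neg_mul_norm_sq q one_half_pos)
  map_smul' a p := by
    simp only [smul_eval, mul_assoc, RingHom.id_apply, smul_eq_mul, integral_const_mul]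

theorem gaussianIntegral_apply (p : MvPolynomial ι ℝ) :
    gaussianIntegral p =
      ∫ y : EuclideanSpace ℝ ι, eval y.ofLp p * Real.exp (-(1 / 2) * ‖y‖ ^ 2) :=
  rfl

theorem hasFDerivAt_exp_neg_half_mul_norm_sq {E : Type*} [NormedAddCommGroup E]
    [InnerProductSpace ℝ E] (x : E) :
    HasFDerivAt (fun z : E ↦ Real.exp (-(1 / 2) * ‖z‖ ^ 2))
      (-(Real.exp (-(1 / 2) * ‖x‖ ^ 2) • innerSL ℝ x)) x := by
  refine ((hasStrictFDerivAt_norm_sq x).hasFDerivAt.const_mul (-(1 / 2) : ℝ)).exp.congr_fderiv ?_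
  ext v
  simp

theorem gaussianIntegral_X_mul (i : ι) (p : MvPolynomial ι ℝ) :
    gaussianIntegral (X i * p) = gaussianIntegral (pderiv i p) := by
  classical
  have hweight (y : EuclideanSpace ℝ ι) :
      fderiv ℝ (fun z : EuclideanSpace ℝ ι ↦ Real.exp (-(1 / 2) * ‖z‖ ^ 2)) y
        (EuclideanSpace.single i 1) = -(y i * Real.exp (-(1 / 2) * ‖y‖ ^ 2)) := by
    rw [(hasFDerivAt_exp_neg_half_mul_norm_sq y).fderiv]
    simp [EuclideanSpace.inner_single_right, mul_comm]
  have hXp (y : EuclideanSpace ℝ ι) :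
      eval y.ofLp p * -(y i * Real.exp (-(1 / 2) * ‖y‖ ^ 2)) =
        -(eval y.ofLp (X i * p) * Real.exp (-(1 / 2) * ‖y‖ ^ 2)) := by
    simp only [map_mul, eval_X]
    ring
  have hparts := integral_mul_fderiv_eq_neg_fderiv_mul_of_integrable
    (μ := (volume : Measure (EuclideanSpace ℝ ι))) (v := EuclideanSpace.single i 1)
    (f := fun z ↦ eval z.ofLp p) (g := fun z ↦ Real.exp (-(1 / 2) * ‖z‖ ^ 2))
    (by
      simp only [fderiv_eval_single]
      exact integrable_eval_mul_exp_neg_mul_norm_sq _ one_half_pos)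
    (by
      simp only [hweight, hXp]
      exact (integrable_eval_mul_exp_neg_mul_norm_sq _ one_half_pos).neg)
    (integrable_eval_mul_exp_neg_mul_norm_sq p one_half_pos)
    (fun y _ ↦ (hasGradientAt_eval p y).differentiableAt)
    (fun y _ ↦ (hasFDerivAt_exp_neg_half_mul_norm_sq y).differentiableAt)
  simp only [hweight, hXp, fderiv_eval_single, integral_neg] at hparts
  exact neg_injective hparts

theorem gaussianIntegral_mul_eq_zero_of_totalDegree_lt {m : ℕ} {p q : MvPolynomial ι ℝ}
    (hpm : p.totalDegree < m) (hq : q.IsHomogeneous m) (hΔ : polyLaplacian q = 0) :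
    gaussianIntegral (p * q) = 0 := by
  induction m generalizing p q with
  | zero => exact absurd hpm (Nat.not_lt_zero _)
  | succ m ih =>
    have hpderiv (i : ι) : gaussianIntegral (pderiv i p * pderiv i q) = 0 := by
      rcases pderiv_eq_zero_or_totalDegree_lt i p with h | h
      · rw [h, zero_mul, map_zero]
      · exact ih (h.trans_le (Nat.le_of_lt_succ hpm)) hq.pderiv
          (by rw [polyLaplacian_pderiv, hΔ, map_zero])
    have hEuler : (m + 1) • (p * q) = ∑ i, X i * (p * pderiv i q) := by
      rw [← mul_smul_comm, ← hq.sum_X_mul_pderiv, Finset.mul_sum]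
      exact Finset.sum_congr rfl fun i _ ↦ mul_left_comm _ _ _
    have hsmul : (m + 1) • gaussianIntegral (p * q) = 0 := by
      calc (m + 1) • gaussianIntegral (p * q)
          = ∑ i, gaussianIntegral (pderiv i (p * pderiv i q)) := by
            rw [← map_nsmul, hEuler, map_sum]
            simp only [gaussianIntegral_X_mul]
        _ = gaussianIntegral (p * polyLaplacian q) +
              ∑ i, gaussianIntegral (pderiv i p * pderiv i q) := by
            simp only [pderiv_mul, map_add, Finset.sum_add_distrib, polyLaplacian_apply,
              Finset.mul_sum, map_sum]
            rw [add_comm]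
        _ = 0 := by simp only [hΔ, mul_zero, map_zero, hpderiv, Finset.sum_const_zero, add_zero]
    exact (smul_eq_zero.1 hsmul).resolve_left m.succ_ne_zero

theorem gaussianIntegral_X_mul_mul {m : ℕ} {p q : MvPolynomial ι ℝ} (i : ι)
    (hpm : p.totalDegree ≤ m) (hq : q.IsHomogeneous m) (hΔ : polyLaplacian q = 0) :
    gaussianIntegral (X i * (p * q)) = gaussianIntegral (p * pderiv i q) := by
  have horth : gaussianIntegral (pderiv i p * q) = 0 := by
    rcases pderiv_eq_zero_or_totalDegree_lt i p with h | h
    · rw [h, zero_mul, map_zero]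
    · exact gaussianIntegral_mul_eq_zero_of_totalDegree_lt (h.trans_le hpm) hq hΔ
  rw [gaussianIntegral_X_mul, pderiv_mul, map_add, horth, zero_add]

theorem gaussianIntegral_eq_gaussianRadialMoment_mul [Nonempty ι] {d : ℕ} {p : MvPolynomial ι ℝ}
    (hp : p.IsHomogeneous d) :
    gaussianIntegral p = gaussianRadialMoment (Fintype.card ι - 1 + d) *
      ∫ u : Metric.sphere (0 : EuclideanSpace ℝ ι) 1, eval (u : EuclideanSpace ℝ ι).ofLp p
        ∂(volume : Measure (EuclideanSpace ℝ ι)).toSphere := by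
  have hpolar := integral_fun_norm_smul_of_homogeneous (volume : Measure (EuclideanSpace ℝ ι))
    (f := fun y ↦ eval y.ofLp p) (fun r _ y ↦ eval_smul_of_isHomogeneous hp r y.ofLp)
    fun r ↦ Real.exp (-(1 / 2) * r ^ 2)
  rw [finrank_euclideanSpace] at hpolar
  simpa only [gaussianIntegral_apply, gaussianRadialMoment, smul_eq_mul,
    mul_comm (Real.exp _) (eval _ _)] using hpolar

end GaussianIntegral

section Sphere

open MvPolynomial

variable {ι : Type*} [Fintype ι]

theorem integral_toSphere_mul_pderiv {d m : ℕ} (hdm : d < m) {p q : MvPolynomial ι ℝ}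
    (hp : p.IsHomogeneous (d + 1)) (hq : q.IsHomogeneous m) (hΔ : polyLaplacian q = 0) (i : ι) :
    ∫ u : Metric.sphere (0 : EuclideanSpace ℝ ι) 1,
        eval (u : EuclideanSpace ℝ ι).ofLp (p * pderiv i q)
        ∂(volume : Measure (EuclideanSpace ℝ ι)).toSphere =
      (Fintype.card ι + d + m) * ∫ u : Metric.sphere (0 : EuclideanSpace ℝ ι) 1,
        eval (u : EuclideanSpace ℝ ι).ofLp (X i * (p * q))
        ∂(volume : Measure (EuclideanSpace ℝ ι)).toSphere := by
  have : Nonempty ι := ⟨i⟩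
  set k := Fintype.card ι - 1 + (d + m)
  have hk : (k : ℝ) + 1 = Fintype.card ι + d + m := by
    have := Fintype.card_pos (α := ι)
    norm_cast
    omega
  have hleft : (p * pderiv i q).IsHomogeneous (d + m) := by
    convert hp.mul (hq.pderiv (i := i)) using 1
    omega
  have hright : (X i * (p * q)).IsHomogeneous (d + m + 2) := by
    convert (isHomogeneous_X ℝ i).mul (hp.mul hq) using 1
    omega
  have hgauss := gaussianIntegral_X_mul_mul i (hp.totalDegree_le.trans hdm) hq hΔ
  rw [gaussianIntegral_eq_gaussianRadialMoment_mul hleft,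
    gaussianIntegral_eq_gaussianRadialMoment_mul hright, ← add_assoc,
    gaussianRadialMoment_add_two, hk, mul_comm _ (gaussianRadialMoment k), mul_assoc] at hgauss
  exact (mul_left_cancel₀ (gaussianRadialMoment_pos k).ne' hgauss).symm

theorem integrable_eval_toSphere (p : MvPolynomial ι ℝ) :
    Integrable (fun u : Metric.sphere (0 : EuclideanSpace ℝ ι) 1 ↦
      eval (u : EuclideanSpace ℝ ι).ofLp p)
      (volume : Measure (EuclideanSpace ℝ ι)).toSphere := by
  have hcont : Continuous fun u : Metric.sphere (0 : EuclideanSpace ℝ ι) 1 ↦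
      eval (u : EuclideanSpace ℝ ι).ofLp p :=
    p.continuous_eval.comp ((PiLp.continuous_ofLp 2 _).comp continuous_subtype_val)
  exact hcont.integrable_of_hasCompactSupport (HasCompactSupport.of_compactSpace _)

theorem integral_toSphere_sum_mul_pderiv {d m : ℕ} (hdm : d < m) {W : ι → MvPolynomial ι ℝ}
    {q : MvPolynomial ι ℝ} (hW : ∀ i, (W i).IsHomogeneous (d + 1)) (hq : q.IsHomogeneous m)
    (hΔ : polyLaplacian q = 0) :
    ∫ u : Metric.sphere (0 : EuclideanSpace ℝ ι) 1,
        eval (u : EuclideanSpace ℝ ι).ofLp (∑ i, W i * pderiv i q)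
        ∂(volume : Measure (EuclideanSpace ℝ ι)).toSphere =
      (Fintype.card ι + d + m) * ∫ u : Metric.sphere (0 : EuclideanSpace ℝ ι) 1,
        eval (u : EuclideanSpace ℝ ι).ofLp (∑ i, X i * (W i * q))
        ∂(volume : Measure (EuclideanSpace ℝ ι)).toSphere := by
  simp only [map_sum]
  rw [integral_finsetSum _ fun i _ ↦ integrable_eval_toSphere _,
    integral_finsetSum _ fun i _ ↦ integrable_eval_toSphere _, Finset.mul_sum]
  exact Finset.sum_congr rfl fun i _ ↦ integral_toSphere_mul_pderiv hdm (hW i) hq hΔ i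

end Sphere

section PolynomialFunctions

open MvPolynomial

variable {n d : ℕ} {f : EuclideanSpace ℝ (Fin n) → ℝ}

theorem exists_isHomogeneous_of_eq_eval
    (hf : ∃ p : MvPolynomial (Fin n) ℝ, ∀ y, f y = eval (fun i ↦ y i) p)
    (hfd : ∀ t : ℝ, 0 < t → ∀ y, f (t • y) = t ^ d * f y) :
    ∃ p : MvPolynomial (Fin n) ℝ, p.IsHomogeneous d ∧ f = fun y ↦ eval y.ofLp p := by
  obtain ⟨p, hp⟩ := hf
  refine ⟨p, isHomogeneous_of_eval_smul (t := 2) (pow_right_injective₀ two_pos (by norm_num))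
    fun x ↦ ?_, funext hp⟩
  have := hfd 2 two_pos (WithLp.toLp 2 x)
  rwa [hp, hp] at this

theorem polyLaplacian_eq_zero_of_sum_secondPartialDeriv {q : MvPolynomial (Fin n) ℝ}
    (hq : ∀ y, ∑ i, secondPartialDeriv (fun z ↦ eval z.ofLp q) i i y = 0) :
    polyLaplacian q = 0 := by
  refine MvPolynomial.funext fun x ↦ ?_
  simpa only [secondPartialDeriv, fderiv_eval_single, polyLaplacian_apply, map_sum, map_zero]
    using hq (WithLp.toLp 2 x)

theorem IsHarmonicHomogeneous.exists_isHomogeneous (hf : IsHarmonicHomogeneous n d f) :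
    ∃ q : MvPolynomial (Fin n) ℝ,
      q.IsHomogeneous d ∧ polyLaplacian q = 0 ∧ f = fun y ↦ eval y.ofLp q := by
  obtain ⟨q, hq, rfl⟩ := exists_isHomogeneous_of_eq_eval hf.1 hf.2.1
  exact ⟨q, hq, polyLaplacian_eq_zero_of_sum_secondPartialDeriv hf.2.2, rfl⟩

theorem mulVecE_apply (A : Matrix (Fin n) (Fin n) ℝ) (y : EuclideanSpace ℝ (Fin n)) (i : Fin n) :
    mulVecE A y i = eval y.ofLp (A.toMvPolynomial i) :=
  (A.toMvPolynomial_eval_eq_apply i y.ofLp).symm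

end PolynomialFunctions

open MvPolynomial in
theorem integral_f_hatXh_general (n d m : ℕ) (hdm : d < m) (f h : EuclideanSpace ℝ (Fin n) → ℝ)
    (hf : ∃ p : MvPolynomial (Fin n) ℝ, ∀ y, f y = eval (fun i ↦ y i) p)
    (hfd : ∀ t : ℝ, 0 < t → ∀ y, f (t • y) = t ^ d * f y) (hh : IsHarmonicHomogeneous n m h)
    (X : Matrix (Fin n) (Fin n) ℝ) :
    ∫ y : Metric.sphere (0 : EuclideanSpace ℝ (Fin n)) 1,
        f y * ⟪mulVecE X y, gradient h y⟫ ∂(sphereMeasure n)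
      = ((n : ℝ) + d + m) * ∫ y : Metric.sphere (0 : EuclideanSpace ℝ (Fin n)) 1,
          ⟪mulVecE X y, (y : EuclideanSpace ℝ (Fin n))⟫ * f y * h y ∂(sphereMeasure n) := by
  obtain ⟨p, hp, rfl⟩ := exists_isHomogeneous_of_eq_eval hf hfd
  obtain ⟨q, hq, hΔ, rfl⟩ := hh.exists_isHomogeneous
  have hleft (y : EuclideanSpace ℝ (Fin n)) :
      eval y.ofLp p * ⟪mulVecE X y, gradient (fun z ↦ eval z.ofLp q) y⟫ =
        eval y.ofLp (∑ i, p * X.toMvPolynomial i * pderiv i q) := by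
    simp only [inner_gradient_eval, mulVecE_apply, map_sum, map_mul, Finset.mul_sum, mul_assoc]
  have hright (y : EuclideanSpace ℝ (Fin n)) :
      ⟪mulVecE X y, y⟫ * eval y.ofLp p * eval y.ofLp q =
        eval y.ofLp (∑ i, MvPolynomial.X i * (p * X.toMvPolynomial i * q)) := by
    simp only [PiLp.inner_apply, mulVecE_apply, map_sum, map_mul, Finset.sum_mul, eval_X,
      RCLike.inner_apply, conj_trivial]
    exact Finset.sum_congr rfl fun i _ ↦ by ring
  have hfield (i : Fin n) : (p * X.toMvPolynomial i).IsHomogeneous (d + 1) :=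
    hp.mul (X.toMvPolynomial_isHomogeneous i)
  simp only [hleft, hright, sphereMeasure]
  rw [integral_toSphere_sum_mul_pderiv hdm hfield hq hΔ, Fintype.card_fin]

/-- For harmonic homogeneous polynomials `f` of degree `s`, `h` of degree `s+2`, and a
trace-free symmetric matrix `X`:
`∫_{S^{n-1}} f(y) ⟨Xy, ∇h(y)⟩ dσ(y) = (n+2s+2) ∫_{S^{n-1}} ⟨Xy,y⟩ f(y) h(y) dσ(y)`. -/
theorem integral_f_hatXh (n s : ℕ) (hn : 2 ≤ n)
    (f h : EuclideanSpace ℝ (Fin n) → ℝ)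
    (hf : IsHarmonicHomogeneous n s f) (hh : IsHarmonicHomogeneous n (s + 2) h)
    (X : Matrix (Fin n) (Fin n) ℝ) (hX : X.IsSymm) (htr : X.trace = 0) :
    ∫ y : Metric.sphere (0 : EuclideanSpace ℝ (Fin n)) 1,
        f y * ⟪mulVecE X y, gradient h y⟫ ∂(sphereMeasure n)
      = ((n : ℝ) + 2 * s + 2) * ∫ y : Metric.sphere (0 : EuclideanSpace ℝ (Fin n)) 1,
          ⟪mulVecE X y, (y : EuclideanSpace ℝ (Fin n))⟫ * f y * h y ∂(sphereMeasure n) := by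
  rw [integral_f_hatXh_general n s (s + 2) (by omega) f h hf.1 hf.2.1 hh X]
  push_cast
  ring
end

section
/- Let a ≥ 0 be an integer and let s, k, l be real numbers with k ≥ 1, l ≥ 1 and s > 2a. Then Σ_{j=0}^{a} (−1)^j · binom(a,j) · Γ((s+k)/2 − j) · Γ(l/2) / Γ((s+k+l)/2 − j) = (−1)^a · Γ(l/2 + a) · Γ((s+k)/2 − a) / Γ((s+k+l)/2). -/
/-!
By Pascal's rule for the beta function `B(x, y) = Γ(x) Γ(y) / Γ(x + y)`, differencing `B(·, y)` with
step `-1` at `x` yields `B(x - 1, y + 1)`. Up to the sign `(-1) ^ a`, the alternating binomial sum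
is the `a`-th iterated difference of `B(·, y)` at `x`, hence equal to `B(x - a, y + a)`.
-/

open Finset fwdDiff

/-- Euler's beta function, continued beyond the half-planes `0 < re x`, `0 < re y` on which
`Complex.betaIntegral` converges. Where `x + y` is a pole of `Γ`, the convention `1 / 0 = 0` gives
`1 / Γ(x + y)` its correct value `0`; where `x` or `y` is a pole, `eulerBeta x y` is junk. -/
noncomputable def eulerBeta (x y : ℂ) : ℂ :=
  Complex.Gamma x * Complex.Gamma y / Complex.Gamma (x + y)

theorem eulerBeta_eq_add {x y : ℂ} (hx : x ≠ 0) (hy : y ≠ 0) :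
    eulerBeta x y = eulerBeta (x + 1) y + eulerBeta x (y + 1) := by
  have inv_Gamma : (Complex.Gamma (x + y))⁻¹ = (x + y) * (Complex.Gamma (x + y + 1))⁻¹ :=
    Complex.one_div_Gamma_eq_self_mul_one_div_Gamma_add_one (x + y)
  simp only [eulerBeta, div_eq_mul_inv]
  rw [inv_Gamma, Complex.Gamma_add_one x hx, Complex.Gamma_add_one y hy, add_right_comm x 1 y,
    ← add_assoc x y 1]
  ring

theorem fwdDiff_neg_one_eulerBeta {x y : ℂ} (hx : x ≠ 1) (hy : y ≠ 0) :
    Δ_[-1] (eulerBeta · y) x = eulerBeta (x - 1) (y + 1) := by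
  have pascal := eulerBeta_eq_add (sub_ne_zero.mpr hx) hy
  rw [sub_add_cancel] at pascal
  rw [fwdDiff, ← sub_eq_add_neg, pascal, add_sub_cancel_left]

theorem fwdDiff_neg_one_iter_eulerBeta (n : ℕ) {x y : ℂ} (hx : ∀ m : ℕ, x - n ≠ -m)
    (hy : ∀ m : ℕ, y ≠ -m) :
    (Δ_[-1])^[n] (eulerBeta · y) x = eulerBeta (x - n) (y + n) := by
  induction n generalizing x y with
  | zero => simp
  | succ n ih =>
    have hx_n (m : ℕ) : x - n ≠ -m := fun h ↦ hx (m + 1) (by push_cast; linear_combination h)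
    have hx_one : x - n ≠ 1 := fun h ↦ hx 0 (by push_cast; linear_combination h)
    have hx_pred (m : ℕ) : x - 1 - n ≠ -m := fun h ↦ hx m (by push_cast; linear_combination h)
    have hy_n : y + n ≠ 0 := fun h ↦ hy n (eq_neg_of_add_eq_zero_left h)
    calc (Δ_[-1])^[n + 1] (eulerBeta · y) x
        = eulerBeta (x - 1 - n) (y + n) - eulerBeta (x - n) (y + n) := by
          rw [Function.iterate_succ_apply', fwdDiff, ← sub_eq_add_neg, ih hx_pred hy, ih hx_n hy]
      _ = Δ_[-1] (eulerBeta · (y + n)) (x - n) := by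
          rw [fwdDiff, ← sub_eq_add_neg, sub_right_comm]
      _ = eulerBeta (x - (n + 1 : ℕ)) (y + (n + 1 : ℕ)) := by
          rw [fwdDiff_neg_one_eulerBeta hx_one hy_n, Nat.cast_succ, sub_sub, add_assoc]

theorem sum_neg_one_pow_mul_choose_mul_eulerBeta (n : ℕ) {x y : ℂ} (hx : ∀ m : ℕ, x - n ≠ -m)
    (hy : ∀ m : ℕ, y ≠ -m) :
    ∑ j ∈ range (n + 1), (-1) ^ j * (n.choose j : ℂ) * eulerBeta (x - j) y =
      (-1) ^ n * eulerBeta (x - n) (y + n) := by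
  rw [← fwdDiff_neg_one_iter_eulerBeta n hx hy, fwdDiff_iter_eq_sum_shift, mul_sum]
  refine sum_congr rfl fun j hj ↦ ?_
  have sign : (-1 : ℂ) ^ j = (-1) ^ n * (-1) ^ (n - j) := by
    rw [← pow_add, neg_one_pow_congr]
    grind
  rw [sign]
  simp [zsmul_eq_mul, sub_eq_add_neg, mul_assoc]

theorem gamma_sum_crofton_general (a : ℕ) (s k l : ℂ) (hsk : ∀ m : ℕ, (s + k) / 2 - a ≠ -m)
    (hl : ∀ m : ℕ, l / 2 ≠ -m) :
    ∑ j ∈ range (a + 1),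
        (-1) ^ j * (a.choose j : ℂ) * Complex.Gamma ((s + k) / 2 - j) *
          Complex.Gamma (l / 2) / Complex.Gamma ((s + k + l) / 2 - j)
      = (-1) ^ a * Complex.Gamma (l / 2 + a) * Complex.Gamma ((s + k) / 2 - a) /
          Complex.Gamma ((s + k + l) / 2) := by
  convert sum_neg_one_pow_mul_choose_mul_eulerBeta a hsk hl using 2 <;>
    (rw [eulerBeta]; ring_nf)

theorem ofReal_ne_neg_natCast {x : ℝ} (hx : 0 < x) (m : ℕ) : (x : ℂ) ≠ -m := by
  have : x ≠ -m := ((neg_nonpos.mpr m.cast_nonneg).trans_lt hx).ne'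
  exact_mod_cast this

/-- Gamma identity from the proof of the Crofton formula for tensor valuations: for an
integer `a ≥ 0` and reals `k ≥ 1`, `l ≥ 1`, `s > 2a`,
`∑_{j=0}^{a} (-1)^j C(a,j) Γ((s+k)/2-j) Γ(l/2) / Γ((s+k+l)/2-j)
  = (-1)^a Γ(l/2+a) Γ((s+k)/2-a) / Γ((s+k+l)/2)`. -/
theorem gamma_sum_crofton (a : ℕ) (s k l : ℝ) (hk : 1 ≤ k) (hl : 1 ≤ l)
    (hs : 2 * (a : ℝ) < s) :
    ∑ j ∈ Finset.range (a + 1),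
        (-1 : ℝ) ^ j * (Nat.choose a j : ℝ) * Real.Gamma ((s + k) / 2 - j) *
          Real.Gamma (l / 2) / Real.Gamma ((s + k + l) / 2 - j)
      = (-1 : ℝ) ^ a * Real.Gamma (l / 2 + a) * Real.Gamma ((s + k) / 2 - a) /
          Real.Gamma ((s + k + l) / 2) := by
  have hsk' := ofReal_ne_neg_natCast (show 0 < (s + k) / 2 - a by linarith)
  have hl' := ofReal_ne_neg_natCast (show 0 < l / 2 by linarith)
  apply Complex.ofReal_injective
  push_cast [← Complex.Gamma_ofReal] at hsk' hl' ⊢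
  exact gamma_sum_crofton_general a s k l hsk' hl'
end
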